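/- For every positive integer n, \(\overline{M}(n) = \sum_{d\mid n} \varphi(d) \sum_{\substack{\delta \mid n\\ \gcd(\delta,d)=1}} \mu(\delta) \sum_{\substack{j=1\\ \delta j \equiv 1 \ (\mathrm{mod}\ d)}}^{n/\delta} f\left(\left\lfloor \frac{n}{j\delta}\right\rfloor\right)\), where \(\varphi\) is Euler's totient function and \(\mu\) is the Möbius function. -/

import Mathlib

open Finset ArithmeticFunction

/-- `f m` is the number of nonempty subsets `A` of `{1, 2, ..., m}` whose elements are
relatively prime, i.e. the gcd of the elements of `A` is `1`. -/
def f (m : ℕ) : ℕ :=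
  ((Finset.Icc 1 m).powerset.filter (fun A => A.Nonempty ∧ A.gcd _root_.id = 1)).card

/-- `Mbar n = ∑ ((A) - 1, n)`, summed over all nonempty subsets `A` of `{1, 2, ..., n}`
such that the gcd `(A)` of the elements of `A` is relatively prime to `n`. -/
def Mbar (n : ℕ) : ℕ :=
  ∑ A ∈ (Finset.Icc 1 n).powerset.filter
      (fun A => A.Nonempty ∧ Nat.gcd (A.gcd _root_.id) n = 1),
    Nat.gcd (A.gcd _root_.id - 1) n

/-!
Dividing by `g` matches the nonempty subsets of `{1, ..., n}` with gcd `g` with the nonempty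
subsets of `{1, ..., n / g}` with gcd `1`, so `Mbar n` is the sum of `f (n / g) * (g - 1, n)` over
the `g ≤ n` coprime to `n`. Expanding `(g - 1, n)` as the sum of `φ d` over the common divisors `d`
of `g - 1` and `n`, and the condition `(g, n) = 1` as the sum of `μ δ` over the common divisors `δ`
of `g` and `n`, gives the formula with `g = δ * j`. Only `δ` coprime to `d` contribute, since
`δ ∣ g` and `g ≡ 1 (mod d)`.
-/

section Multiples

variable {d : ℕ}

theorem image_mul_left_Icc_div (hd : 0 < d) (n : ℕ) :
    (Icc 1 (n / d)).image (d * ·) = {a ∈ Icc 1 n | d ∣ a} := by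
  ext a
  simp only [mem_image, mem_filter, mem_Icc]
  constructor
  · rintro ⟨j, ⟨hj, hjn⟩, rfl⟩
    exact ⟨⟨Nat.mul_pos hd hj, mul_comm d j ▸ (Nat.le_div_iff_mul_le hd).1 hjn⟩, dvd_mul_right d j⟩
  · rintro ⟨⟨ha, han⟩, j, rfl⟩
    exact ⟨j, ⟨Nat.pos_of_mul_pos_left ha, (Nat.le_div_iff_mul_le hd).2 (mul_comm d j ▸ han)⟩, rfl⟩

theorem sum_Icc_div_mul_left {M : Type*} [AddCommMonoid M] (hd : 0 < d) (n : ℕ) (F : ℕ → M) :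
    ∑ j ∈ Icc 1 (n / d), F (d * j) = ∑ a ∈ Icc 1 n with d ∣ a, F a := by
  rw [← image_mul_left_Icc_div hd, sum_image (mul_right_injective₀ hd.ne').injOn]

end Multiples

section SubsetGcd

theorem gcd_image_mul_left {α : Type*} [CommMonoidWithZero α] [StrongNormalizedGCDMonoid α]
    [DecidableEq α] (a : α) (s : Finset α) :
    (s.image (a * ·)).gcd _root_.id = normalize a * s.gcd _root_.id := by
  rw [gcd_image]
  exact Finset.gcd_mul_left

theorem filter_gcd_eq_image_filter_gcd_eq_one {g : ℕ} (hg : 0 < g) (n : ℕ) :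
    {A ∈ (Icc 1 n).powerset | A.Nonempty ∧ A.gcd _root_.id = g} =
      {B ∈ (Icc 1 (n / g)).powerset | B.Nonempty ∧ B.gcd _root_.id = 1}.image
        (Finset.image (g * ·)) := by
  have gcd_image_mul (B : Finset ℕ) :
      (B.image (g * ·)).gcd _root_.id = g ↔ B.gcd _root_.id = 1 := by
    rw [gcd_image_mul_left, normalize_eq, Nat.mul_eq_left hg.ne']
  ext A
  simp only [mem_filter, mem_powerset, mem_image]
  constructor
  · rintro ⟨hAn, hA, hAg⟩
    have hA_image : A ⊆ (Icc 1 (n / g)).image (g * ·) := fun a ha => by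
      rw [image_mul_left_Icc_div hg, mem_filter]
      exact ⟨hAn ha, hAg ▸ gcd_dvd (f := _root_.id) ha⟩
    obtain ⟨B, hBn, rfl⟩ := subset_image_iff.1 hA_image
    exact ⟨B, ⟨hBn, image_nonempty.1 hA, (gcd_image_mul B).1 hAg⟩, rfl⟩
  · rintro ⟨B, ⟨hBn, hB, hB1⟩, rfl⟩
    refine ⟨?_, hB.image _, (gcd_image_mul B).2 hB1⟩
    calc B.image (g * ·) ⊆ (Icc 1 (n / g)).image (g * ·) := image_subset_image hBn
      _ = {a ∈ Icc 1 n | g ∣ a} := image_mul_left_Icc_div hg n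
      _ ⊆ Icc 1 n := filter_subset _ _

theorem card_filter_gcd_eq {g : ℕ} (hg : 0 < g) (n : ℕ) :
    #{A ∈ (Icc 1 n).powerset | A.Nonempty ∧ A.gcd _root_.id = g} = f (n / g) := by
  rw [filter_gcd_eq_image_filter_gcd_eq_one hg,
    card_image_of_injective _ (image_injective (mul_right_injective₀ hg.ne')), f]

theorem gcd_mem_Icc_of_subset {A : Finset ℕ} {n : ℕ} (hAn : A ⊆ Icc 1 n) (hA : A.Nonempty) :
    A.gcd _root_.id ∈ Icc 1 n := by
  obtain ⟨a, ha⟩ := hA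
  obtain ⟨ha_pos, han⟩ := mem_Icc.1 (hAn ha)
  have h_dvd : A.gcd _root_.id ∣ a := gcd_dvd (f := _root_.id) ha
  exact mem_Icc.2 ⟨Nat.pos_of_dvd_of_pos h_dvd ha_pos, (Nat.le_of_dvd ha_pos h_dvd).trans han⟩

theorem sum_powerset_gcd_eq_sum_nsmul {M : Type*} [AddCommMonoid M] (n : ℕ) (F : ℕ → M) :
    ∑ A ∈ (Icc 1 n).powerset with A.Nonempty, F (A.gcd _root_.id) =
      ∑ g ∈ Icc 1 n, f (n / g) • F g := by
  have gcd_mem : ∀ A ∈ (Icc 1 n).powerset.filter Finset.Nonempty, A.gcd _root_.id ∈ Icc 1 n :=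
    fun A hA => gcd_mem_Icc_of_subset (mem_powerset.1 (mem_filter.1 hA).1) (mem_filter.1 hA).2
  rw [← sum_fiberwise_of_maps_to' gcd_mem]
  refine sum_congr rfl fun g hg => ?_
  rw [sum_const, filter_filter, card_filter_gcd_eq (mem_Icc.1 hg).1]

theorem Mbar_eq_sum_coprime (n : ℕ) :
    Mbar n = ∑ g ∈ Icc 1 n with g.Coprime n, (g - 1).gcd n * f (n / g) := by
  rw [Mbar, ← filter_filter, sum_filter,
    sum_powerset_gcd_eq_sum_nsmul n fun g => if g.gcd n = 1 then (g - 1).gcd n else 0, sum_filter]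
  simp only [smul_eq_mul, mul_ite, mul_zero, mul_comm]

end SubsetGcd

section DivisorSums

variable {n : ℕ}

theorem filter_dvd_divisors (hn : n ≠ 0) (m : ℕ) :
    {d ∈ n.divisors | d ∣ m} = (m.gcd n).divisors := by
  ext d
  simp [Nat.dvd_gcd_iff, hn, and_comm]

theorem sum_totient_filter_dvd (hn : n ≠ 0) (m : ℕ) :
    ∑ d ∈ n.divisors with d ∣ m, d.totient = m.gcd n := by
  rw [filter_dvd_divisors hn, Nat.sum_totient]

theorem sum_moebius_filter_dvd (hn : n ≠ 0) (m : ℕ) :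
    ∑ d ∈ n.divisors with d ∣ m, moebius d = if m.Coprime n then 1 else 0 := by
  rw [filter_dvd_divisors hn, ← coe_mul_zeta_apply, moebius_mul_coe_zeta, one_apply]

theorem sum_gcd_nsmul {ι M : Type*} [AddCommMonoid M] (hn : n ≠ 0) (s : Finset ι) (u : ι → ℕ)
    (F : ι → M) :
    ∑ i ∈ s, (u i).gcd n • F i =
      ∑ d ∈ n.divisors, d.totient • ∑ i ∈ s with d ∣ u i, F i := by
  simp only [← sum_totient_filter_dvd hn, sum_smul, smul_sum, sum_filter, smul_ite, smul_zero,
    ite_smul, zero_smul]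
  exact sum_comm

theorem sum_filter_coprime {ι M : Type*} [AddCommGroup M] (hn : n ≠ 0) (s : Finset ι) (u : ι → ℕ)
    (F : ι → M) :
    ∑ i ∈ s with (u i).Coprime n, F i =
      ∑ δ ∈ n.divisors, moebius δ • ∑ i ∈ s with δ ∣ u i, F i := by
  calc ∑ i ∈ s with (u i).Coprime n, F i
      = ∑ i ∈ s, (∑ δ ∈ n.divisors with δ ∣ u i, moebius δ) • F i := by
        simp only [sum_moebius_filter_dvd hn, ite_smul, one_smul, zero_smul, sum_filter]
    _ = ∑ δ ∈ n.divisors, moebius δ • ∑ i ∈ s with δ ∣ u i, F i := by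
        simp only [sum_smul, smul_sum, sum_filter, smul_ite, smul_zero, ite_smul, zero_smul]
        exact sum_comm

theorem sum_filter_coprime_modEq {M : Type*} [AddCommGroup M] {a d : ℕ} (hn : n ≠ 0)
    (had : a.Coprime d) (N : ℕ) (F : ℕ → M) :
    ∑ g ∈ Icc 1 N with g.Coprime n ∧ g ≡ a [MOD d], F g =
      ∑ δ ∈ n.divisors with δ.Coprime d,
        moebius δ • ∑ j ∈ Icc 1 (N / δ) with δ * j ≡ a [MOD d], F (δ * j) := by
  have coprime_of_inner_ne_zero {δ : ℕ}
      (h : ∑ j ∈ Icc 1 (N / δ) with δ * j ≡ a [MOD d], F (δ * j) ≠ 0) : δ.Coprime d := by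
    obtain ⟨j, hj, -⟩ := exists_ne_zero_of_sum_ne_zero h
    have hja : δ * j ≡ a [MOD d] := (mem_filter.1 hj).2
    exact Nat.Coprime.coprime_mul_right (hja.gcd_eq.trans had)
  rw [sum_filter_of_ne fun δ _ h => coprime_of_inner_ne_zero (right_ne_zero_of_smul h),
    ← filter_filter, filter_comm, sum_filter_coprime hn _ (fun g => g)]
  refine sum_congr rfl fun δ hδ => ?_
  rw [filter_comm, sum_filter, ← sum_Icc_div_mul_left (Nat.pos_of_mem_divisors hδ), ← sum_filter]

end DivisorSums

theorem Mbar_eq (n : ℕ) (hn : 0 < n) :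
    (Mbar n : ℤ) = ∑ d ∈ n.divisors, (Nat.totient d : ℤ) *
      ∑ δ ∈ n.divisors.filter (fun δ => Nat.gcd δ d = 1), (moebius δ) *
        ∑ j ∈ (Finset.Icc 1 (n / δ)).filter (fun j => δ * j % d = 1 % d),
          (f (n / (j * δ)) : ℤ) := by
  have dvd_sub_one_iff {d g : ℕ} (hg : g ∈ Icc 1 n) : d ∣ g - 1 ↔ g ≡ 1 [MOD d] := by
    rw [Nat.ModEq.comm, Nat.modEq_iff_dvd' (mem_Icc.1 hg).1]
  calc (Mbar n : ℤ)
      = ∑ g ∈ Icc 1 n with g.Coprime n, (g - 1).gcd n • (f (n / g) : ℤ) := by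
        simp only [Mbar_eq_sum_coprime, Nat.cast_sum, Nat.cast_mul, nsmul_eq_mul]
    _ = ∑ d ∈ n.divisors, d.totient •
          ∑ g ∈ Icc 1 n with g.Coprime n ∧ d ∣ g - 1, (f (n / g) : ℤ) := by
        simp only [sum_gcd_nsmul hn.ne', filter_filter]
    _ = ∑ d ∈ n.divisors, d.totient •
          ∑ g ∈ Icc 1 n with g.Coprime n ∧ g ≡ 1 [MOD d], (f (n / g) : ℤ) := by
        refine sum_congr rfl fun d _ => ?_
        rw [filter_congr fun g hg => and_congr_right fun _ => dvd_sub_one_iff hg]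
    _ = _ := by
        simp only [sum_filter_coprime_modEq hn.ne' (Nat.coprime_one_left _), nsmul_eq_mul,
          smul_eq_mul, mul_comm]
        rfl
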